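/- arXiv:1805.01121 — 4 statements merged into one kernel-verified Lean document; each statement's English description precedes it below -/
import Mathlib

section
/- For every positive integer n, the limit as q → 1⁻ (q real, 0 < q < 1) of ((q; q²)_∞)^{n-1} (q²; q²)_∞ / (q^{2/n}; q^{2/n})_∞ equals 2^{(n-1)/2} / √n. -/
/-- Infinite q-Pochhammer symbol `(a; q)_∞ = ∏_{i=0}^∞ (1 - a qⁱ)` (real version). -/
noncomputable def qPochR (a q : ℝ) : ℝ := ∏' i : ℕ, (1 - a * q ^ i)

open Filter Topology Complex

lemma norm_eta_mul_I {y : ℝ} (hy : 0 < y) :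
    ‖ModularForm.eta (y * I)‖ = Real.exp (-(Real.pi * y / 12)) *
      qPochR (Real.exp (-(2 * Real.pi * y))) (Real.exp (-(2 * Real.pi * y))) := by
  have hz : (y * I : ℂ) ∈ UpperHalfPlane.upperHalfPlaneSet := by
    simpa [UpperHalfPlane.upperHalfPlaneSet] using hy
  rw [ModularForm.eta, norm_mul,
    (ModularForm.multipliableLocallyUniformlyOn_eta.multipliable hz).norm_tprod, qPochR]
  congr 1
  · simp only [Function.Periodic.qParam, norm_exp]
    congr 1
    simp
    ring
  · refine tprod_congr fun k => ?_
    have hq : cexp (2 * Real.pi * I * (y * I)) = (Real.exp (-(2 * Real.pi * y)) : ℂ) := by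
      push_cast
      congr 1
      linear_combination (2 * Real.pi * y : ℂ) * I_sq
    rw [ModularForm.eta_q_eq_pow, hq, ← pow_succ']
    norm_cast
    refine abs_of_nonneg (sub_nonneg.2 (pow_le_one₀ (Real.exp_pos _).le ?_))
    exact Real.exp_le_one_iff.2 (neg_nonpos.2 (by positivity))

lemma qPochR_exp_pos {y : ℝ} (hy : 0 < y) :
    0 < qPochR (Real.exp (-(2 * Real.pi * y))) (Real.exp (-(2 * Real.pi * y))) := by
  have hz : (y * I : ℂ) ∈ UpperHalfPlane.upperHalfPlaneSet := by
    simpa [UpperHalfPlane.upperHalfPlaneSet] using hy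
  have h := norm_pos_iff.2 (ModularForm.eta_ne_zero hz)
  rw [norm_eta_mul_I hy] at h
  exact pos_of_mul_pos_right h (Real.exp_pos _).le

lemma norm_csqrt (z : ℂ) : ‖sqrt z‖ = Real.sqrt ‖z‖ := by
  have h := norm_cpow_real z 2⁻¹
  rw [Real.sqrt_eq_rpow, one_div, ← h, sqrt]
  push_cast
  rfl

/-- The modular inversion formula for the Euler product on the imaginary axis. -/
lemma qPochR_exp_inversion {y : ℝ} (hy : 0 < y) :
    Real.sqrt y * Real.exp (Real.pi / (12 * y)) *
        qPochR (Real.exp (-(2 * Real.pi * y))) (Real.exp (-(2 * Real.pi * y))) =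
      Real.exp (Real.pi * y / 12) *
        qPochR (Real.exp (-(2 * Real.pi * y⁻¹))) (Real.exp (-(2 * Real.pi * y⁻¹))) := by
  have hz : (y * I : ℂ) ∈ UpperHalfPlane.upperHalfPlaneSet := by
    simpa [UpperHalfPlane.upperHalfPlaneSet] using hy
  have h := congrArg norm (ModularForm.eta_comp_eq_csqrt_I_inv hz)
  have hinv : (-1 / (y * I) : ℂ) = ((y⁻¹ : ℝ) : ℂ) * I := by
    have : (y : ℂ) ≠ 0 := by exact_mod_cast hy.ne'
    push_cast
    field_simp
    simp
  simp only [Function.comp_apply, hinv, Pi.smul_apply, Pi.mul_apply, smul_eq_mul, norm_mul,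
    norm_inv, norm_csqrt, norm_I, Real.sqrt_one, inv_one, one_mul, mul_one, norm_real,
    Real.norm_eq_abs, abs_of_pos hy] at h
  rw [norm_eta_mul_I hy, norm_eta_mul_I (inv_pos.2 hy)] at h
  rw [show Real.pi / (12 * y) = Real.pi * y⁻¹ / 12 by field_simp]
  have h₁ : Real.exp (Real.pi * y / 12) * Real.exp (-(Real.pi * y / 12)) = 1 := by
    rw [← Real.exp_add, add_neg_cancel, Real.exp_zero]
  have h₂ : Real.exp (Real.pi * y⁻¹ / 12) * Real.exp (-(Real.pi * y⁻¹ / 12)) = 1 := by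
    rw [← Real.exp_add, add_neg_cancel, Real.exp_zero]
  generalize qPochR (Real.exp (-(2 * Real.pi * y))) _ = A at h ⊢
  generalize qPochR (Real.exp (-(2 * Real.pi * y⁻¹))) _ = B at h ⊢
  linear_combination (-Real.exp (Real.pi * y / 12) * Real.exp (Real.pi * y⁻¹ / 12)) * h -
    √y * Real.exp (Real.pi * y⁻¹ / 12) * A * h₁ + Real.exp (Real.pi * y / 12) * B * h₂

lemma tendsto_qPochR_self_zero : Tendsto (fun r : ℝ => qPochR r r) (𝓝 0) (𝓝 1) := by
  have h := tendsto_tprod_one_add_of_dominated_convergence (𝓕 := 𝓝 (0 : ℝ)) (g := 0)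
    (f := fun (q : ℝ) (n : ℕ) ↦ -(q * q ^ n)) (bound := fun n ↦ (1 / 2 : ℝ) ^ (n + 1))
    ((summable_nat_add_iff 1).2 (summable_geometric_of_abs_lt_one (by norm_num)))
    (fun k => by
      have : Continuous fun q : ℝ => -(q * q ^ k) := by fun_prop
      simpa using this.tendsto 0)
    (by
      filter_upwards [Metric.ball_mem_nhds (0 : ℝ) (by norm_num : (0 : ℝ) < 1 / 2)] with q hq k
      rw [norm_neg, ← pow_succ', norm_pow]
      exact pow_le_pow_left₀ (norm_nonneg _) (mem_ball_zero_iff.mp hq).le _)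
  simpa [qPochR, sub_eq_add_neg] using h

lemma tendsto_sqrt_mul_exp_mul_qPochR_exp :
    Tendsto (fun y : ℝ => Real.sqrt y * Real.exp (Real.pi / (12 * y)) *
        qPochR (Real.exp (-(2 * Real.pi * y))) (Real.exp (-(2 * Real.pi * y))))
      (𝓝[>] 0) (𝓝 1) := by
  have h₁ : Tendsto (fun y : ℝ => Real.exp (Real.pi * y / 12)) (𝓝[>] 0) (𝓝 1) := by
    have : Continuous fun y : ℝ => Real.exp (Real.pi * y / 12) := by fun_prop
    simpa using (this.tendsto 0).mono_left nhdsWithin_le_nhds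
  have h₂ : Tendsto (fun y : ℝ => Real.exp (-(2 * Real.pi * y⁻¹))) (𝓝[>] 0) (𝓝 0) :=
    Real.tendsto_exp_neg_atTop_nhds_zero.comp
      (tendsto_inv_nhdsGT_zero.const_mul_atTop Real.two_pi_pos)
  have h := h₁.mul (tendsto_qPochR_self_zero.comp h₂)
  rw [one_mul] at h
  refine h.congr' ?_
  filter_upwards [self_mem_nhdsWithin] with y hy
  exact (qPochR_exp_inversion hy).symm

lemma multipliable_one_sub_mul_pow (a : ℝ) {q : ℝ} (hq₀ : 0 ≤ q) (hq : q < 1) :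
    Multipliable fun i : ℕ => 1 - a * q ^ i := by
  simpa [sub_eq_add_neg] using Real.multipliable_one_add_of_summable
    ((summable_geometric_of_lt_one hq₀ hq).mul_left a).neg

lemma qPochR_mul_qPochR_sq {q : ℝ} (hq₀ : 0 ≤ q) (hq : q < 1) :
    qPochR q (q ^ 2) * qPochR (q ^ 2) (q ^ 2) = qPochR q q := by
  have hq2 : q ^ 2 < 1 := pow_lt_one₀ hq₀ hq two_ne_zero
  have h₁ := multipliable_one_sub_mul_pow q (sq_nonneg q) hq2
  have h₂ := multipliable_one_sub_mul_pow (q ^ 2) (sq_nonneg q) hq2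
  have e₁ (k : ℕ) : 1 - q * (q ^ 2) ^ k = 1 - q * q ^ (2 * k) := by rw [pow_mul]
  have e₂ (k : ℕ) : 1 - q ^ 2 * (q ^ 2) ^ k = 1 - q * q ^ (2 * k + 1) := by ring
  simp only [qPochR, e₁, e₂] at h₁ h₂ ⊢
  exact tprod_even_mul_odd (f := fun k => 1 - q * q ^ k) h₁ h₂

/-- The ratio of normalized Euler products produced by `q = exp (-2πy)`. -/
lemma pow_div_mul_div_eq (m : ℕ) {y A B C : ℝ} (hy : 0 < y) (hB : B ≠ 0) (hC : C ≠ 0) :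
    (Real.sqrt y * Real.exp (Real.pi / (12 * y)) * A /
          (Real.sqrt (2 * y) * Real.exp (Real.pi / (12 * (2 * y))) * B)) ^ m *
        (Real.sqrt (2 * y) * Real.exp (Real.pi / (12 * (2 * y))) * B) /
        (Real.sqrt (2 / (m + 1 : ℝ) * y) *
          Real.exp (Real.pi / (12 * (2 / (m + 1 : ℝ) * y))) * C) *
      ((2 : ℝ) ^ ((m : ℝ) / 2) / Real.sqrt (m + 1)) = (A / B) ^ m * B / C := by
  have hm : (0 : ℝ) < m + 1 := by positivity
  set u := Real.exp (Real.pi / (12 * (2 * y))) with hu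
  have hu₀ : u ≠ 0 := (Real.exp_pos _).ne'
  have e₁ : Real.exp (Real.pi / (12 * y)) = u ^ 2 := by
    rw [hu, ← Real.exp_nat_mul]
    congr 1
    push_cast
    field_simp
  have e₂ : Real.exp (Real.pi / (12 * (2 / (m + 1 : ℝ) * y))) = u ^ (m + 1) := by
    rw [hu, ← Real.exp_nat_mul]
    congr 1
    push_cast
    field_simp
  have e₃ : (2 : ℝ) ^ ((m : ℝ) / 2) = Real.sqrt 2 ^ m := by
    rw [Real.sqrt_eq_rpow, ← Real.rpow_natCast, ← Real.rpow_mul zero_le_two]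
    congr 1
    ring
  rw [e₁, e₂, e₃, Real.sqrt_mul zero_le_two, Real.sqrt_mul (by positivity),
    Real.sqrt_div zero_le_two]
  have hy' : Real.sqrt y ≠ 0 := (Real.sqrt_pos.2 hy).ne'
  have hm' : Real.sqrt (m + 1 : ℝ) ≠ 0 := (Real.sqrt_pos.2 hm).ne'
  have h2' : Real.sqrt 2 ≠ 0 := by positivity
  rw [show Real.sqrt y * u ^ 2 * A / (Real.sqrt 2 * Real.sqrt y * u * B) =
    u * A / (Real.sqrt 2 * B) by field_simp]
  simp only [div_pow, mul_pow, pow_succ]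
  field_simp

theorem key_limit (n : ℕ) (hn : 0 < n) :
    Filter.Tendsto
      (fun q : ℝ =>
        (qPochR q (q ^ 2)) ^ (n - 1) * qPochR (q ^ 2) (q ^ 2) /
          qPochR (q ^ ((2 : ℝ) / n)) (q ^ ((2 : ℝ) / n)))
      (nhdsWithin 1 (Set.Ioo 0 1))
      (nhds ((2 : ℝ) ^ (((n : ℝ) - 1) / 2) / Real.sqrt n)) := by
  obtain ⟨m, rfl⟩ : ∃ m, n = m + 1 := ⟨n - 1, by lia⟩
  simp only [Nat.cast_add, Nat.cast_one, add_sub_cancel_right, Nat.add_sub_cancel]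
  set c : ℝ := 2 / (m + 1 : ℝ) with hc
  have hc₀ : 0 < c := by positivity
  have hscale {a : ℝ} (ha : 0 < a) : Tendsto (fun y : ℝ => a * y) (𝓝[>] 0) (𝓝[>] 0) := by
    refine tendsto_nhdsWithin_iff.2 ⟨?_, ?_⟩
    · have : Continuous fun y : ℝ => a * y := by fun_prop
      simpa using (this.tendsto 0).mono_left nhdsWithin_le_nhds
    · filter_upwards [self_mem_nhdsWithin] with y hy using mul_pos ha hy
  have hF := tendsto_sqrt_mul_exp_mul_qPochR_exp
  have hF₂ := hF.comp (hscale two_pos)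
  have hFc := hF.comp (hscale hc₀)
  have hlim := (((hF.div hF₂ one_ne_zero).pow m).mul hF₂ |>.div hFc one_ne_zero).mul_const
    ((2 : ℝ) ^ ((m : ℝ) / 2) / Real.sqrt (m + 1))
  have hlog : Tendsto (fun q : ℝ => -Real.log q / (2 * Real.pi))
      (𝓝[Set.Ioo 0 1] 1) (𝓝[>] 0) := by
    refine tendsto_nhdsWithin_iff.2 ⟨?_, ?_⟩
    · simpa using (((Real.continuousAt_log one_ne_zero).tendsto.neg.div_const
        (2 * Real.pi)).mono_left nhdsWithin_le_nhds)
    · filter_upwards [self_mem_nhdsWithin] with q hq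
      exact div_pos (neg_pos.2 (Real.log_neg hq.1 hq.2)) Real.two_pi_pos
  have h := hlim.comp hlog
  simp only [div_one, one_pow, one_mul] at h
  refine h.congr' ?_
  filter_upwards [self_mem_nhdsWithin] with q hq
  set y := -Real.log q / (2 * Real.pi) with hy
  have hy₀ : 0 < y := div_pos (neg_pos.2 (Real.log_neg hq.1 hq.2)) Real.two_pi_pos
  have hpow (a : ℝ) : Real.exp (-(2 * Real.pi * (a * y))) = q ^ a := by
    rw [Real.rpow_def_of_pos hq.1, hy]
    congr 1
    field_simp
  have hpow₁ : Real.exp (-(2 * Real.pi * y)) = q := by simpa using hpow 1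
  have hpow₂ : Real.exp (-(2 * Real.pi * (2 * y))) = q ^ 2 := by simpa using hpow 2
  have hB := (qPochR_exp_pos (mul_pos two_pos hy₀)).ne'
  have hC := (qPochR_exp_pos (mul_pos hc₀ hy₀)).ne'
  have key := pow_div_mul_div_eq m (A := qPochR q q) hy₀ hB hC
  rw [hpow₂] at hB
  rw [hpow₂, hpow, ← qPochR_mul_qPochR_sq hq.1.le hq.2, mul_div_cancel_right₀ _ hB] at key
  rw [← key]
  simp only [Function.comp_apply, Pi.div_apply, ← hy, hpow₁, hpow₂,
    hpow, qPochR_mul_qPochR_sq hq.1.le hq.2, hc]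
end

section
/- Let m > 1 be an integer and let q be a real number with 0 < q < 1. Then ∏_{k=1}^{2^{m-1}} Γ_q((2k-1)/2^m) = (1-q)^{2^{m-2}} · ψ(q^{1/2^m}) · ∏_{k=1}^{m-1} (ψ(q^{1/2^k}))^{2^{m-1-k}}. -/
/-- The q-gamma function `Γ_q(z) = ((q;q)_∞ / (q^z;q)_∞) (1-q)^{1-z}` for `0 < q < 1`. -/
noncomputable def qGamma (q z : ℝ) : ℝ :=
  qPochR q q / qPochR (q ^ z) q * (1 - q) ^ (1 - z)

/-- Ramanujan's theta function `ψ(q) = (q²;q²)_∞ / (q;q²)_∞`. -/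
noncomputable def psiR (q : ℝ) : ℝ := qPochR (q ^ 2) (q ^ 2) / qPochR q (q ^ 2)

/-- The factors of `(a; q)_∞` are multipliable. -/
theorem multipliable_qPochR (a : ℝ) {q : ℝ} (hq0 : 0 ≤ q) (hq1 : q < 1) :
    Multipliable fun i : ℕ => 1 - a * q ^ i := by
  have h : Summable fun i : ℕ => ‖-(a * q ^ i)‖ :=
    ((summable_geometric_of_lt_one hq0 hq1).mul_left a).neg.norm
  simpa only [sub_eq_add_neg] using multipliable_one_add_of_summable h

theorem qPochR_ne_zero {a q : ℝ} (ha0 : 0 ≤ a) (ha1 : a < 1) (hq0 : 0 ≤ q) (hq1 : q < 1) :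
    qPochR a q ≠ 0 := by
  have h : Summable fun i : ℕ => ‖-(a * q ^ i)‖ :=
    ((summable_geometric_of_lt_one hq0 hq1).mul_left a).neg.norm
  have key := tprod_one_add_ne_zero_of_summable (f := fun i : ℕ => -(a * q ^ i)) (fun i => by
    have h1 : a * q ^ i ≤ a := mul_le_of_le_one_right ha0 (pow_le_one₀ hq0 hq1.le)
    linarith) h
  simpa only [qPochR, sub_eq_add_neg] using key

theorem prod_range_mul_residues (f : ℕ → ℝ) (n N : ℕ) :
    ∏ i ∈ Finset.range (n * N), f i =
      ∏ j ∈ Finset.range n, ∏ i ∈ Finset.range N, f (n * i + j) := by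
  induction N with
  | zero => simp
  | succ N ih =>
    simp only [Finset.prod_range_succ, Finset.prod_mul_distrib]
    rw [Nat.mul_succ, Finset.prod_range_add, ih]

/-- Splitting `(a; q)_∞` according to the residue of the index modulo `n`. -/
theorem qPochR_eq_prod_residues (a : ℝ) {q : ℝ} (hq0 : 0 ≤ q) (hq1 : q < 1) {n : ℕ}
    (hn : n ≠ 0) :
    qPochR a q = ∏ j ∈ Finset.range n, qPochR (a * q ^ j) (q ^ n) := by
  have hl := (multipliable_qPochR a hq0 hq1).hasProd.tendsto_prod_nat.comp
    (Filter.tendsto_id.const_mul_atTop' (Nat.pos_of_ne_zero hn))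
  have hr := tendsto_finsetProd (Finset.range n) fun j _ =>
    (multipliable_qPochR (a * q ^ j) (pow_nonneg hq0 n)
      (pow_lt_one₀ hq0 hq1 hn)).hasProd.tendsto_prod_nat
  refine tendsto_nhds_unique hl (hr.congr fun N => ?_)
  simp only [Function.comp_apply, id_eq, prod_range_mul_residues]
  refine Finset.prod_congr rfl fun j _ => Finset.prod_congr rfl fun i _ => ?_
  ring

theorem psiR_eq_sq_div {x : ℝ} (hx0 : 0 ≤ x) (hx1 : x < 1) :
    psiR x = qPochR (x ^ 2) (x ^ 2) ^ 2 / qPochR x x := by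
  have h20 : 0 ≤ x ^ 2 := pow_nonneg hx0 2
  have h21 : x ^ 2 < 1 := pow_lt_one₀ hx0 hx1 two_ne_zero
  have h1 := qPochR_ne_zero hx0 hx1 h20 h21
  have h2 := qPochR_ne_zero h20 h21 h20 h21
  have h := qPochR_eq_prod_residues x hx0 hx1 two_ne_zero
  simp only [Finset.prod_range_succ, Finset.prod_range_zero, pow_zero, pow_one, one_mul,
    mul_one, ← sq] at h
  rw [psiR, h]
  field_simp

theorem prod_sq_div_pow_telescope (e : ℕ → ℝ) (he : ∀ k, e k ≠ 0) (n : ℕ) :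
    ∏ k ∈ Finset.Icc 1 n, (e (k - 1) ^ 2 / e k) ^ 2 ^ (n - k) = e 0 ^ 2 ^ n / e n := by
  induction n with
  | zero => simp [he 0]
  | succ n ih =>
    have hstep : ∏ k ∈ Finset.Icc 1 n, (e (k - 1) ^ 2 / e k) ^ 2 ^ (n + 1 - k) =
        (∏ k ∈ Finset.Icc 1 n, (e (k - 1) ^ 2 / e k) ^ 2 ^ (n - k)) ^ 2 := by
      rw [← Finset.prod_pow]
      refine Finset.prod_congr rfl fun k hk => ?_
      rw [Nat.sub_add_comm (Finset.mem_Icc.mp hk).2, pow_succ 2, pow_mul]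
    have h1 := he n
    have h2 := he (n + 1)
    rw [Finset.prod_Icc_succ_top (by lia), hstep, ih]
    simp only [Nat.sub_self, Nat.add_sub_cancel, pow_zero, pow_one, pow_succ 2 n, pow_mul]
    field_simp

theorem sum_one_sub_odd_div (n : ℕ) :
    ∑ j ∈ Finset.range n, (1 - (2 * ((j + 1 : ℕ) : ℝ) - 1) / (2 * n)) = n / 2 := by
  rcases eq_or_ne n 0 with rfl | hn
  · simp
  have hodd : ∀ N : ℕ, ∑ j ∈ Finset.range N, (2 * ((j + 1 : ℕ) : ℝ) - 1) = (N : ℝ) ^ 2 := by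
    intro N
    induction N with
    | zero => simp
    | succ N ih => rw [Finset.sum_range_succ, ih]; push_cast; ring
  rw [Finset.sum_sub_distrib, ← Finset.sum_div, hodd]
  have : (n : ℝ) ≠ 0 := Nat.cast_ne_zero.mpr hn
  simp
  field_simp
  ring

/-- The product of `Γ_q` over the odd multiples of `1 / (2n)` in `(0, 1)`. -/
theorem prod_qGamma_odd {q : ℝ} (hq0 : 0 < q) (hq1 : q < 1) {n : ℕ} (hn : n ≠ 0) :
    ∏ k ∈ Finset.Icc 1 n, qGamma q ((2 * (k : ℝ) - 1) / (2 * n)) =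
      qPochR q q ^ n /
        qPochR (q ^ (1 / (2 * n) : ℝ)) ((q ^ (1 / (2 * n) : ℝ)) ^ 2) *
        (1 - q) ^ ((n : ℝ) / 2) := by
  set x : ℝ := q ^ (1 / (2 * n) : ℝ) with hx
  have hx0 : 0 ≤ x := Real.rpow_nonneg hq0.le _
  have hx1 : x < 1 := Real.rpow_lt_one hq0.le hq1 (by positivity)
  have hxq : (x ^ 2) ^ n = q := by
    rw [← pow_mul, hx, ← Real.rpow_mul_natCast hq0.le]
    push_cast
    rw [one_div_mul_cancel (by positivity), Real.rpow_one]
  have hconst : qPochR q q ^ n = ∏ _j ∈ Finset.range n, qPochR q q := by simp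
  have hshift (f : ℕ → ℝ) : ∏ k ∈ Finset.Icc 1 n, f k = ∏ j ∈ Finset.range n, f (j + 1) := by
    rw [Finset.range_eq_Ico, Finset.prod_Ico_add' f 0 n 1]
    rfl
  rw [← sum_one_sub_odd_div n, Real.rpow_sum_of_pos (by linarith),
    qPochR_eq_prod_residues x (pow_nonneg hx0 2) (pow_lt_one₀ hx0 hx1 two_ne_zero) hn, hxq,
    hconst, ← Finset.prod_div_distrib, ← Finset.prod_mul_distrib, hshift]
  refine Finset.prod_congr rfl fun j _ => ?_
  have hxj : x * (x ^ 2) ^ j = q ^ ((2 * ((j + 1 : ℕ) : ℝ) - 1) / (2 * n)) := by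
    rw [← pow_mul, ← pow_succ', hx, ← Real.rpow_mul_natCast hq0.le]
    congr 1
    push_cast
    ring
  rw [qGamma, hxj]

theorem two_power_product (m : ℕ) (hm : 1 < m) (q : ℝ) (hq0 : 0 < q) (hq1 : q < 1) :
    ∏ k ∈ Finset.Icc 1 (2 ^ (m - 1) : ℕ), qGamma q ((2 * (k : ℝ) - 1) / 2 ^ m) =
      (1 - q) ^ (2 ^ (m - 2)) * psiR (q ^ ((1 : ℝ) / 2 ^ m)) *
        ∏ k ∈ Finset.Icc 1 (m - 1), (psiR (q ^ ((1 : ℝ) / 2 ^ k))) ^ (2 ^ (m - 1 - k)) := by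
  obtain ⟨n, rfl⟩ : ∃ n, m = n + 2 := ⟨m - 2, by lia⟩
  let x : ℕ → ℝ := fun k => q ^ ((1 : ℝ) / 2 ^ k)
  have hx0 (k : ℕ) : 0 ≤ x k := Real.rpow_nonneg hq0.le _
  have hx1 (k : ℕ) : x k < 1 := Real.rpow_lt_one hq0.le hq1 (by positivity)
  have hxsq (k : ℕ) : x (k + 1) ^ 2 = x k := by
    simp only [x]
    rw [← Real.rpow_mul_natCast hq0.le]
    congr 1
    push_cast
    field_simp
    ring
  have hxz : x 0 = q := by simp [x]
  have he (k : ℕ) : qPochR (x k) (x k) ≠ 0 := qPochR_ne_zero (hx0 k) (hx1 k) (hx0 k) (hx1 k)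
  have hprod : ∏ k ∈ Finset.Icc 1 (n + 1), psiR (x k) ^ 2 ^ (n + 1 - k) =
      qPochR q q ^ 2 ^ (n + 1) / qPochR (x (n + 1)) (x (n + 1)) := by
    rw [← hxz, ← prod_sq_div_pow_telescope (fun k => qPochR (x k) (x k)) he]
    refine Finset.prod_congr rfl fun k hk => ?_
    obtain ⟨l, rfl⟩ : ∃ l, k = l + 1 := ⟨k - 1, by grind⟩
    rw [psiR_eq_sq_div (hx0 _) (hx1 _), hxsq, Nat.add_sub_cancel]
  have hgamma := prod_qGamma_odd hq0 hq1 (n := 2 ^ (n + 1)) (by positivity)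
  have hpow : (2 * ((2 ^ (n + 1) : ℕ) : ℝ)) = 2 ^ (n + 2) := by push_cast; ring
  have hexp : (((2 ^ (n + 1) : ℕ) : ℝ) / 2) = ((2 ^ n : ℕ) : ℝ) := by push_cast; ring
  rw [hpow, hexp, Real.rpow_natCast] at hgamma
  change _ = _ * psiR (x (n + 2)) * ∏ k ∈ Finset.Icc 1 (n + 1), psiR (x k) ^ 2 ^ (n + 1 - k)
  rw [hprod, psiR, hxsq]
  refine hgamma.trans ?_
  change _ / qPochR (x (n + 2)) (x (n + 2) ^ 2) * _ = _
  rw [hxsq]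
  have h1 := he (n + 1)
  rw [Nat.add_sub_cancel]
  field_simp
end

section
/- Let n be a positive integer, let τ be a complex number with Im(τ) > 0, and set q = e^{πiτ}. Then ∏_{k=1}^{n-1} sin_{q^n}(kπ/n) = q^{(n-1)(n-2)/12} · ((q²; q²)_∞)² / (((q^n; q^{2n})_∞)^{2n-2} ((q^{2n}; q^{2n})_∞)²), where q^{(n-1)(n-2)/12} denotes e^{πiτ(n-1)(n-2)/12} and sin_{q^n} is formed with parameter nτ (nome q^n = e^{πinτ}). -/
open Complex

/-- Infinite q-Pochhammer symbol `(a; q)_∞ = ∏_{i=0}^∞ (1 - a qⁱ)`. -/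
noncomputable def qPoch (a q : ℂ) : ℂ := ∏' i : ℕ, (1 - a * q ^ i)

/-- Jacobi's first theta function
`θ₁(z | τ) = 2 ∑_{n=0}^∞ (-1)ⁿ e^{πiτ(2n+1)²/4} sin((2n+1)z)`. -/
noncomputable def theta1 (z τ : ℂ) : ℂ :=
  2 * ∑' n : ℕ, (-1 : ℂ) ^ n * Complex.exp (Real.pi * Complex.I * τ * (2 * n + 1) ^ 2 / 4) *
    Complex.sin ((2 * n + 1) * z)

/-- Gosper's q-sine with parameter `τ` (nome `q = e^{πiτ}`):
`sin_q(z) = θ₁(z | -1/τ) / θ₁(π/2 | -1/τ)`. -/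
noncomputable def qSin (τ z : ℂ) : ℂ :=
  theta1 z (-1 / τ) / theta1 ((Real.pi : ℂ) / 2) (-1 / τ)

open Filter Topology

/-- The finite product `(q; q)_n = ∏_{i=1}^n (1 - qⁱ)`. -/
noncomputable def qFactorial (q : ℂ) (n : ℕ) : ℂ := ∏ i ∈ Finset.range n, (1 - q * q ^ i)

lemma qFactorial_succ (q : ℂ) (n : ℕ) :
    qFactorial q (n + 1) = qFactorial q n * (1 - q * q ^ n) :=
  Finset.prod_range_succ _ _

lemma qFactorial_zero (q : ℂ) : qFactorial q 0 = 1 := Finset.prod_range_zero _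

lemma one_sub_mul_pow_ne_zero {a q : ℂ} (ha : ‖a‖ < 1) (hq : ‖q‖ < 1) (i : ℕ) :
    1 - a * q ^ i ≠ 0 := by
  intro h
  have h1 : ‖a * q ^ i‖ = 1 := by rw [← sub_eq_zero.mp h, norm_one]
  rw [norm_mul, norm_pow] at h1
  have := pow_le_one₀ (n := i) (norm_nonneg q) hq.le
  nlinarith [norm_nonneg a]

lemma qFactorial_ne_zero {q : ℂ} (hq : ‖q‖ < 1) (n : ℕ) : qFactorial q n ≠ 0 :=
  Finset.prod_ne_zero_iff.mpr fun i _ => one_sub_mul_pow_ne_zero hq hq i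

lemma summable_norm_mul_pow (a : ℂ) {q : ℂ} (hq : ‖q‖ < 1) :
    Summable fun i : ℕ => ‖-(a * q ^ i)‖ := by
  simpa [norm_mul, norm_pow] using
    (summable_geometric_of_lt_one (norm_nonneg q) hq).mul_left ‖a‖

lemma multipliable_qPoch (a : ℂ) {q : ℂ} (hq : ‖q‖ < 1) :
    Multipliable fun i : ℕ => 1 - a * q ^ i := by
  simpa [sub_eq_add_neg] using multipliable_one_add_of_summable (summable_norm_mul_pow a hq)

lemma tendsto_qPoch (a : ℂ) {q : ℂ} (hq : ‖q‖ < 1) :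
    Tendsto (fun n => ∏ i ∈ Finset.range n, (1 - a * q ^ i)) atTop (𝓝 (qPoch a q)) :=
  (multipliable_qPoch a hq).tendsto_prod_tprod_nat

lemma qPoch_ne_zero {a q : ℂ} (ha : ‖a‖ < 1) (hq : ‖q‖ < 1) : qPoch a q ≠ 0 := by
  simpa [qPoch, sub_eq_add_neg] using tprod_one_add_ne_zero_of_summable
    (f := fun i : ℕ => -(a * q ^ i))
    (fun i => by simpa [sub_eq_add_neg] using one_sub_mul_pow_ne_zero ha hq i)
    (summable_norm_mul_pow a hq)

lemma norm_sq_lt_one {Q : ℂ} (hQ : ‖Q‖ < 1) : ‖Q ^ 2‖ < 1 := by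
  rw [norm_pow]
  exact pow_lt_one₀ (norm_nonneg _) hQ two_ne_zero

/-- The `q`-binomial theorem. -/
theorem prod_one_add_mul_pow_eq_sum {q : ℂ} (hq : ‖q‖ < 1) (x : ℂ) (M : ℕ) :
    ∏ m ∈ Finset.range M, (1 + x * q ^ m) =
      ∑ j ∈ Finset.range (M + 1),
        qFactorial q M / (qFactorial q j * qFactorial q (M - j)) * q ^ (j.choose 2) * x ^ j := by
  have hF := qFactorial_ne_zero hq
  induction M with
  | zero => simp [qFactorial_zero]
  | succ M ih =>
    set a : ℕ → ℕ → ℂ := fun M j =>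
      qFactorial q M / (qFactorial q j * qFactorial q (M - j)) * q ^ (j.choose 2) * x ^ j with ha
    have hzero (M : ℕ) : a M 0 = 1 := by simp [ha, qFactorial_zero, hF M]
    have hlast : a (M + 1) (M + 1) = x * q ^ M * a M M := by
      simp only [ha, Nat.sub_self, qFactorial_zero, mul_one, div_self (hF _), one_mul]
      rw [Nat.choose_succ_succ' M 1, Nat.choose_one_right]
      ring
    have hmid : ∀ j ∈ Finset.range M, a (M + 1) (j + 1) = a M (j + 1) + x * q ^ M * a M j := by
      intro j hj
      obtain ⟨d, rfl⟩ : ∃ d, M = j + 1 + d := Nat.exists_eq_add_of_le (Finset.mem_range.mp hj)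
      have h1 : j + 1 + d + 1 - (j + 1) = d + 1 := by omega
      have h2 : j + 1 + d - (j + 1) = d := by omega
      have h3 : j + 1 + d - j = d + 1 := by omega
      simp only [ha, h1, h2, h3, qFactorial_succ q (j + 1 + d), qFactorial_succ q j,
        qFactorial_succ q d, Nat.choose_succ_succ' j 1, Nat.choose_one_right]
      have := hF j
      have := hF d
      have := one_sub_mul_pow_ne_zero hq hq j
      have := one_sub_mul_pow_ne_zero hq hq d
      field_simp
      ring
    change _ = ∑ j ∈ Finset.range (M + 1 + 1), a (M + 1) j
    change _ = ∑ j ∈ Finset.range (M + 1), a M j at ih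
    have e1 : ∑ j ∈ Finset.range (M + 1), a M j = ∑ j ∈ Finset.range M, a M (j + 1) + 1 := by
      rw [Finset.sum_range_succ', hzero]
    have e2 := Finset.sum_range_succ (a M) M
    rw [Finset.prod_range_succ, ih, mul_add, mul_one, Finset.sum_range_succ' _ (M + 1),
      Finset.sum_range_succ (fun j => a (M + 1) (j + 1)) M, hzero, hlast,
      Finset.sum_congr rfl hmid, Finset.sum_add_distrib,
      ← Finset.mul_sum]
    linear_combination e1 + x * q ^ M * e2

/-- Coefficients of the finite form of the Jacobi triple product. -/
noncomputable def centralCoeff (q : ℂ) (N : ℕ) (k : ℤ) : ℂ :=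
  if k ∈ Finset.Icc (-N : ℤ) N then
    qFactorial q (2 * N) / (qFactorial q (N + k).toNat * qFactorial q (N - k).toNat)
  else 0

/-- Finite form of the Jacobi triple product. -/
theorem finite_triple_product {Q w : ℂ} (hQ : ‖Q‖ < 1) (hQ0 : Q ≠ 0) (hw : w ≠ 0) (N : ℕ) :
    (∏ m ∈ Finset.range N, (1 + Q * w * (Q ^ 2) ^ m)) *
      ∏ m ∈ Finset.range N, (1 + Q / w * (Q ^ 2) ^ m) =
      ∑' k : ℤ, centralCoeff (Q ^ 2) N k * (Q ^ (k ^ 2) * w ^ k) := by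
  have hq := norm_sq_lt_one hQ
  have hbin := prod_one_add_mul_pow_eq_sum hq (w * Q * Q ^ (-(2 * N : ℤ))) (2 * N)
  have hlow : ∏ m ∈ Finset.range N, (1 + w * Q * Q ^ (-(2 * N : ℤ)) * (Q ^ 2) ^ m) =
      w ^ N * Q ^ (-(N ^ 2 : ℤ)) * ∏ m ∈ Finset.range N, (1 + Q / w * (Q ^ 2) ^ m) := by
    have hexp : ∏ m ∈ Finset.range N, (w * Q ^ (-(2 * m + 1 : ℤ))) =
        w ^ N * Q ^ (-(N ^ 2 : ℤ)) := by
      clear hbin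
      induction N with
      | zero => simp
      | succ N ih =>
        rw [Finset.prod_range_succ, ih, pow_succ w, mul_mul_mul_comm, ← zpow_add₀ hQ0]
        congr 2
        push_cast
        ring
    rw [← hexp, ← Finset.prod_mul_distrib, ← Finset.prod_range_reflect]
    refine Finset.prod_congr rfl fun m hm => ?_
    have hm := Finset.mem_range.mp hm
    obtain ⟨d, rfl⟩ : ∃ d, N = m + 1 + d := Nat.exists_eq_add_of_le hm
    have h1 : m + 1 + d - 1 - m = d := by omega
    rw [h1]
    have e1 : w * Q * Q ^ (-(2 * (m + 1 + d : ℕ) : ℤ)) * (Q ^ 2) ^ d =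
        w * Q ^ (-(2 * m + 1 : ℤ)) := by
      rw [← pow_mul, ← zpow_natCast Q (2 * d), mul_assoc w, mul_assoc w, ← zpow_one_add₀ hQ0,
        ← zpow_add₀ hQ0]
      congr 2
      push_cast
      ring
    have e2 : w * Q ^ (-(2 * m + 1 : ℤ)) * (Q / w * (Q ^ 2) ^ m) = 1 := by
      rw [zpow_neg, ← pow_mul]
      have : Q ^ (2 * m + 1 : ℤ) = Q * Q ^ (2 * m) := by
        rw [← pow_succ', ← zpow_natCast]; norm_num
      rw [this]
      field_simp
    rw [e1, mul_add, e2, mul_one, add_comm]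
  have hhigh : ∏ m ∈ Finset.range N, (1 + w * Q * Q ^ (-(2 * N : ℤ)) * (Q ^ 2) ^ (N + m)) =
      ∏ m ∈ Finset.range N, (1 + Q * w * (Q ^ 2) ^ m) := by
    refine Finset.prod_congr rfl fun m _ => ?_
    have : Q ^ (-(2 * N : ℤ)) * (Q ^ 2) ^ N = 1 := by
      rw [← pow_mul, zpow_neg, ← zpow_natCast]
      push_cast
      exact inv_mul_cancel₀ (zpow_ne_zero _ hQ0)
    rw [pow_add, mul_assoc (w * Q), ← mul_assoc _ ((Q ^ 2) ^ N), this]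
    ring
  rw [two_mul, Finset.prod_range_add, ← two_mul, hlow, hhigh] at hbin
  have hunit : w ^ N * Q ^ (-(N ^ 2 : ℤ)) ≠ 0 :=
    mul_ne_zero (pow_ne_zero _ hw) (zpow_ne_zero _ hQ0)
  have hprod : (∏ m ∈ Finset.range N, (1 + Q * w * (Q ^ 2) ^ m)) *
      ∏ m ∈ Finset.range N, (1 + Q / w * (Q ^ 2) ^ m) = (w ^ N * Q ^ (-(N ^ 2 : ℤ)))⁻¹ *
      (w ^ N * Q ^ (-(N ^ 2 : ℤ)) * (∏ m ∈ Finset.range N, (1 + Q / w * (Q ^ 2) ^ m)) *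
        ∏ m ∈ Finset.range N, (1 + Q * w * (Q ^ 2) ^ m)) := by
    rw [mul_assoc, inv_mul_cancel_left₀ hunit, mul_comm]
  rw [hprod, hbin, Finset.mul_sum, tsum_eq_sum (s := Finset.Icc (-N : ℤ) N)
    fun k hk => by simp only [centralCoeff, if_neg hk, zero_mul]]
  refine Finset.sum_bij (fun j _ => (j : ℤ) - N) ?_ ?_ ?_ ?_
  · intro j hj
    simp only [Finset.mem_range, Finset.mem_Icc] at *
    omega
  · intro i _ j _ h
    simpa using h
  · intro k hk
    simp only [Finset.mem_Icc] at hk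
    refine ⟨(k + N).toNat, ?_, ?_⟩
    · simp only [Finset.mem_range]
      omega
    · omega
  · intro j hj
    have hj' : j ≤ 2 * N := Nat.lt_succ_iff.mp (Finset.mem_range.mp hj)
    have hmem : (j : ℤ) - N ∈ Finset.Icc (-N : ℤ) N := by
      simp only [Finset.mem_Icc]
      omega
    have h1 : ((N : ℤ) + (j - N)).toNat = j := by omega
    have h2 : ((N : ℤ) - (j - N)).toNat = 2 * N - j := by omega
    have h3 : (Q ^ 2) ^ j.choose 2 * Q ^ j = Q ^ (j ^ 2 : ℤ) := by
      rw [← pow_mul, ← pow_add, mul_comm 2, Nat.choose_two_right,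
        Nat.div_mul_cancel (Nat.even_mul_pred_self j).two_dvd, ← zpow_natCast]
      congr 1
      cases j with
      | zero => simp
      | succ j => push_cast [Nat.add_sub_cancel]; ring
    simp only [centralCoeff, if_pos hmem, h1, h2]
    have h4 : Q ^ (((j : ℤ) - N) ^ 2) =
        Q ^ (j ^ 2 : ℤ) * (Q ^ (-(2 * N : ℤ))) ^ j * (Q ^ (-(N ^ 2 : ℤ)))⁻¹ := by
      rw [← zpow_natCast (Q ^ (-(2 * N : ℤ))) j, ← zpow_mul, ← zpow_neg, ← zpow_add₀ hQ0,
        ← zpow_add₀ hQ0]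
      congr 1
      ring
    rw [h4, ← h3, zpow_sub₀ hw, zpow_natCast, zpow_natCast, mul_pow, mul_pow, mul_inv]
    ring

lemma tendsto_qFactorial {q : ℂ} (hq : ‖q‖ < 1) :
    Tendsto (qFactorial q) atTop (𝓝 (qPoch q q)) :=
  tendsto_qPoch q hq

lemma tendsto_centralCoeff {q : ℂ} (hq : ‖q‖ < 1) (k : ℤ) :
    Tendsto (fun N => centralCoeff q N k) atTop (𝓝 (qPoch q q)⁻¹) := by
  have hL := qPoch_ne_zero hq hq
  have hplus : Tendsto (fun N : ℕ => ((N : ℤ) + k).toNat) atTop atTop :=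
    tendsto_atTop.mpr fun b => (eventually_ge_atTop (b + k.natAbs)).mono fun N hN => by omega
  have hminus : Tendsto (fun N : ℕ => ((N : ℤ) - k).toNat) atTop atTop :=
    tendsto_atTop.mpr fun b => (eventually_ge_atTop (b + k.natAbs)).mono fun N hN => by omega
  have hdouble : Tendsto (fun N : ℕ => 2 * N) atTop atTop :=
    tendsto_atTop.mpr fun b => (eventually_ge_atTop b).mono fun N hN => by omega
  have hF := tendsto_qFactorial hq
  have hlim := (hF.comp hdouble).div ((hF.comp hplus).mul (hF.comp hminus)) (mul_ne_zero hL hL)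
  rw [div_mul_cancel_left₀ hL] at hlim
  refine hlim.congr' ((eventually_ge_atTop k.natAbs).mono fun N hN => ?_)
  have hmem : k ∈ Finset.Icc (-N : ℤ) N := by
    simp only [Finset.mem_Icc]
    omega
  simp only [centralCoeff, if_pos hmem, Pi.div_apply, Function.comp_apply]

lemma exists_norm_centralCoeff_le {q : ℂ} (hq : ‖q‖ < 1) :
    ∃ C : ℝ, ∀ N k, ‖centralCoeff q N k‖ ≤ C := by
  have hF := tendsto_qFactorial hq
  obtain ⟨A, hA⟩ := hF.norm.bddAbove_range
  obtain ⟨B, hB⟩ := (hF.inv₀ (qPoch_ne_zero hq hq)).norm.bddAbove_range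
  replace hA (n : ℕ) : ‖qFactorial q n‖ ≤ A := hA ⟨n, rfl⟩
  replace hB (n : ℕ) : ‖(qFactorial q n)⁻¹‖ ≤ B := hB ⟨n, rfl⟩
  have hA0 : 0 ≤ A := (norm_nonneg _).trans (hA 0)
  have hB0 : 0 ≤ B := (norm_nonneg _).trans (hB 0)
  refine ⟨A * (B * B), fun N k => ?_⟩
  rw [centralCoeff]
  split_ifs with h
  · rw [div_eq_mul_inv, mul_inv, norm_mul, norm_mul]
    gcongr <;> first | exact hA _ | exact hB _
  · rw [norm_zero]
    positivity

lemma jacobiTheta₂_term_eq (k : ℤ) (v T : ℂ) :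
    jacobiTheta₂_term k v T =
      exp (Real.pi * I * T) ^ (k ^ 2) * exp (2 * Real.pi * I * v) ^ k := by
  rw [jacobiTheta₂_term, ← exp_int_mul, ← exp_int_mul, ← exp_add]
  congr 1
  push_cast
  ring

lemma norm_exp_pi_I_mul_lt_one {T : ℂ} (hT : 0 < T.im) : ‖exp (Real.pi * I * T)‖ < 1 := by
  rw [norm_exp, Real.exp_lt_one_iff]
  simpa using mul_pos Real.pi_pos hT

/-- The Jacobi triple product. -/
theorem jacobiTheta₂_eq_qPoch {T : ℂ} (hT : 0 < T.im) (v : ℂ) :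
    jacobiTheta₂ v T =
      qPoch (exp (Real.pi * I * T) ^ 2) (exp (Real.pi * I * T) ^ 2) *
        (qPoch (-(exp (Real.pi * I * T) * exp (2 * Real.pi * I * v))) (exp (Real.pi * I * T) ^ 2) *
          qPoch (-(exp (Real.pi * I * T) / exp (2 * Real.pi * I * v)))
            (exp (Real.pi * I * T) ^ 2)) := by
  have hsum := (summable_jacobiTheta₂_term_iff v T).mpr hT
  simp only [jacobiTheta₂, jacobiTheta₂_term_eq] at hsum ⊢
  have hQ := norm_exp_pi_I_mul_lt_one hT
  have hQ0 := exp_ne_zero (Real.pi * I * T)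
  have hw := exp_ne_zero (2 * Real.pi * I * v)
  set Q := exp (Real.pi * I * T)
  set w := exp (2 * Real.pi * I * v)
  have hq := norm_sq_lt_one hQ
  obtain ⟨C, hC⟩ := exists_norm_centralCoeff_le hq
  have hseries : Tendsto
      (fun N => ∑' k : ℤ, centralCoeff (Q ^ 2) N k * (Q ^ (k ^ 2) * w ^ k)) atTop
      (𝓝 (∑' k : ℤ, (qPoch (Q ^ 2) (Q ^ 2))⁻¹ * (Q ^ (k ^ 2) * w ^ k))) :=
    tendsto_tsum_of_dominated_convergence (hsum.norm.mul_left C)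
      (fun k => (tendsto_centralCoeff hq k).mul_const _)
      (Eventually.of_forall fun N k => by
        rw [norm_mul]
        gcongr
        exact hC N k)
  have hprod := (tendsto_qPoch (-(Q * w)) hq).mul (tendsto_qPoch (-(Q / w)) hq)
  simp only [neg_mul, sub_neg_eq_add, finite_triple_product hQ hQ0 hw] at hprod
  rw [← tendsto_nhds_unique hseries hprod, tsum_mul_left,
    mul_inv_cancel_left₀ (qPoch_ne_zero hq hq)]

lemma theta1_eq_jacobiTheta₂ (z : ℂ) {T : ℂ} (hT : 0 < T.im) :
    theta1 z T = I * exp (Real.pi * I * T / 4 - I * z) *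
      jacobiTheta₂ (z / Real.pi - 1 / 2 - T / 2) T := by
  have hpi : (Real.pi : ℂ) ≠ 0 := by exact_mod_cast Real.pi_ne_zero
  have hsum := (summable_jacobiTheta₂_term_iff (z / Real.pi - 1 / 2 - T / 2) T).mpr hT
  have hsplit : jacobiTheta₂ (z / Real.pi - 1 / 2 - T / 2) T = ∑' n : ℕ,
      (jacobiTheta₂_term ((n : ℤ) + 1) (z / Real.pi - 1 / 2 - T / 2) T +
        jacobiTheta₂_term (-(n : ℤ)) (z / Real.pi - 1 / 2 - T / 2) T) := by
    have hshift := tsum_nat_add_neg_add_one ((Equiv.addRight (1 : ℤ)).summable_iff.mpr hsum)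
    rw [Function.comp_def, (Equiv.addRight (1 : ℤ)).tsum_eq
      (jacobiTheta₂_term · (z / Real.pi - 1 / 2 - T / 2) T)] at hshift
    simpa [jacobiTheta₂] using hshift.symm
  have hterm (m : ℤ) : I * exp (Real.pi * I * T / 4 - I * z) *
      jacobiTheta₂_term m (z / Real.pi - 1 / 2 - T / 2) T =
      I * (-1) ^ m * exp (Real.pi * I * T * (2 * m - 1) ^ 2 / 4) * exp ((2 * m - 1) * z * I) := by
    have hone : (-1 : ℂ) ^ m = exp (m * (-(Real.pi * I))) := by
      rw [exp_int_mul, exp_neg, exp_pi_mul_I]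
      norm_num
    rw [jacobiTheta₂_term, hone, mul_assoc I, ← exp_add, mul_assoc I, ← exp_add, mul_assoc I,
      ← exp_add]
    congr 2
    field_simp
    ring
  rw [theta1, hsplit, ← tsum_mul_left, ← tsum_mul_left]
  refine tsum_congr fun n => ?_
  rw [mul_add, hterm, hterm, Complex.sin]
  have h1 : (-1 : ℂ) ^ ((n : ℤ) + 1) = -(-1) ^ n := by
    rw [zpow_add_one₀ (by norm_num), zpow_natCast]
    ring
  have h2 : (-1 : ℂ) ^ (-(n : ℤ)) = (-1) ^ n := by
    rw [zpow_neg, zpow_natCast, ← inv_pow]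
    norm_num
  rw [h1, h2]
  push_cast
  have e1 : (2 * ((n : ℂ) + 1) - 1) = 2 * n + 1 := by ring
  have e2 : (2 * (-(n : ℂ)) - 1) = -(2 * n + 1) := by ring
  rw [e1, e2, neg_sq]
  ring_nf

/-- Product formula for `θ₁` after the modular transformation `T ↦ -1/T`. -/
lemma theta1_neg_one_div (z : ℂ) {T : ℂ} (hT : 0 < T.im) :
    theta1 z (-1 / T) = (-I * T) ^ (1 / 2 : ℂ) *
      exp (Real.pi * I * T * (z / Real.pi - 1 / 2) ^ 2) *
      (qPoch (exp (Real.pi * I * T) ^ 2) (exp (Real.pi * I * T) ^ 2) *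
        (qPoch (exp (2 * I * z * T)) (exp (Real.pi * I * T) ^ 2) *
          qPoch (exp (Real.pi * I * T) ^ 2 / exp (2 * I * z * T)) (exp (Real.pi * I * T) ^ 2))) := by
  have hpi : (Real.pi : ℂ) ≠ 0 := by exact_mod_cast Real.pi_ne_zero
  have hT0 : T ≠ 0 := by
    rintro rfl
    simp at hT
  have hT' : 0 < (-1 / T).im := by
    rw [neg_div, neg_im, one_div, inv_im, neg_div, neg_neg]
    exact div_pos hT (normSq_pos.mpr hT0)
  rw [theta1_eq_jacobiTheta₂ z hT']
  set u : ℂ := z / Real.pi - 1 / 2 - -1 / T / 2 with hu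
  have hfun := jacobiTheta₂_functional_equation (u * T) T
  rw [mul_div_cancel_right₀ _ hT0, jacobiTheta₂_eq_qPoch hT] at hfun
  have hroot : (-I * T) ^ (1 / 2 : ℂ) ≠ 0 := by
    rw [cpow_ne_zero_iff_of_exponent_ne_zero (by norm_num)]
    exact mul_ne_zero (neg_ne_zero.mpr I_ne_zero) hT0
  have hx : exp (2 * Real.pi * I * (u * T)) = -(exp (2 * I * z * T) / exp (Real.pi * I * T)) := by
    rw [← exp_sub, ← neg_one_mul, ← exp_pi_mul_I, ← exp_add, hu]
    congr 1
    field_simp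
    ring
  have hQ0 := exp_ne_zero (Real.pi * I * T)
  have hx0 := exp_ne_zero (2 * I * z * T)
  have h1 : -(exp (Real.pi * I * T) * -(exp (2 * I * z * T) / exp (Real.pi * I * T))) =
      exp (2 * I * z * T) := by
    field_simp
  have h2 : -(exp (Real.pi * I * T) / -(exp (2 * I * z * T) / exp (Real.pi * I * T))) =
      exp (Real.pi * I * T) ^ 2 / exp (2 * I * z * T) := by
    field_simp
  rw [hx, h1, h2] at hfun
  rw [hfun]
  have hexp : I * exp (Real.pi * I * (-1 / T) / 4 - I * z) =
      exp (Real.pi * I * T * (z / Real.pi - 1 / 2) ^ 2) *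
        exp (-Real.pi * I * (u * T) ^ 2 / T) := by
    nth_rewrite 1 [← exp_pi_div_two_mul_I]
    rw [← exp_add, ← exp_add, hu]
    congr 1
    field_simp
    ring
  rw [hexp]
  field_simp

lemma qSin_eq_qPoch (z : ℂ) {T : ℂ} (hT : 0 < T.im) :
    qSin T z = exp (Real.pi * I * T * (z / Real.pi - 1 / 2) ^ 2) *
      (qPoch (exp (2 * I * z * T)) (exp (Real.pi * I * T) ^ 2) *
        qPoch (exp (Real.pi * I * T) ^ 2 / exp (2 * I * z * T)) (exp (Real.pi * I * T) ^ 2)) /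
      qPoch (exp (Real.pi * I * T)) (exp (Real.pi * I * T) ^ 2) ^ 2 := by
  have hpi : (Real.pi : ℂ) ≠ 0 := by exact_mod_cast Real.pi_ne_zero
  have hT0 : T ≠ 0 := by
    rintro rfl
    simp at hT
  have hroot : (-I * T) ^ (1 / 2 : ℂ) ≠ 0 := by
    rw [cpow_ne_zero_iff_of_exponent_ne_zero (by norm_num)]
    exact mul_ne_zero (neg_ne_zero.mpr I_ne_zero) hT0
  have hQ := norm_exp_pi_I_mul_lt_one hT
  have h1 : exp (2 * I * (Real.pi / 2) * T) = exp (Real.pi * I * T) := by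
    congr 1
    ring
  have h2 : exp (Real.pi * I * T * (Real.pi / 2 / Real.pi - 1 / 2) ^ 2) = 1 := by
    rw [div_div_cancel_left' hpi]
    norm_num
  have hsq : exp (Real.pi * I * T) ^ 2 / exp (Real.pi * I * T) = exp (Real.pi * I * T) := by
    rw [pow_two, mul_div_cancel_right₀ _ (exp_ne_zero _)]
  have hP := qPoch_ne_zero (norm_sq_lt_one hQ) (norm_sq_lt_one hQ)
  have hP' := qPoch_ne_zero hQ (norm_sq_lt_one hQ)
  rw [qSin, theta1_neg_one_div z hT, theta1_neg_one_div _ hT, h1, h2, hsq]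
  generalize qPoch (exp (Real.pi * I * T) ^ 2) (exp (Real.pi * I * T) ^ 2) = A at hP ⊢
  field_simp

/-- Splitting a `q`-Pochhammer symbol according to residue classes. -/
lemma prod_qPoch_residue {p : ℂ} (hp : ‖p‖ < 1) (a : ℂ) {n : ℕ} (hn : 0 < n) :
    ∏ j ∈ Finset.range n, qPoch (a * p ^ j) (p ^ n) = qPoch a p := by
  have hpn : ‖p ^ n‖ < 1 := by
    rw [norm_pow]
    exact pow_lt_one₀ (norm_nonneg _) hp hn.ne'
  have hlim := tendsto_finsetProd (Finset.range n) fun j _ => tendsto_qPoch (a * p ^ j) hpn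
  refine tendsto_nhds_unique hlim
    (((tendsto_qPoch a hp).comp (tendsto_id.atTop_mul_const' hn)).congr fun N => ?_)
  simp only [Function.comp_apply, id]
  induction N with
  | zero => simp
  | succ N ih =>
    simp only [Finset.prod_range_succ _ N, Finset.prod_mul_distrib]
    rw [Nat.succ_mul, Finset.prod_range_add, ih]
    congr 1
    refine Finset.prod_congr rfl fun j _ => ?_
    ring

lemma sum_range_sq_sub_half (m : ℕ) :
    ∑ i ∈ Finset.range m, ((m : ℂ) + 1) * (((i : ℂ) + 1) / (m + 1) - 1 / 2) ^ 2 =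
      (m : ℂ) * (m - 1) / 12 := by
  have hm : (m : ℂ) + 1 ≠ 0 := Nat.cast_add_one_ne_zero m
  have hlin (N : ℕ) : ∑ i ∈ Finset.range N, ((i : ℂ) + 1) = (N : ℂ) * (N + 1) / 2 := by
    induction N with
    | zero => simp
    | succ N ih => rw [Finset.sum_range_succ, ih]; push_cast; ring
  have hquad (N : ℕ) :
      ∑ i ∈ Finset.range N, ((i : ℂ) + 1) ^ 2 = (N : ℂ) * (N + 1) * (2 * N + 1) / 6 := by
    induction N with
    | zero => simp
    | succ N ih => rw [Finset.sum_range_succ, ih]; push_cast; ring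
  have hterm (i : ℕ) : ((m : ℂ) + 1) * (((i : ℂ) + 1) / (m + 1) - 1 / 2) ^ 2 =
      1 / (m + 1) * ((i : ℂ) + 1) ^ 2 - ((i : ℂ) + 1) + (m + 1) / 4 := by
    field_simp
    ring
  simp only [hterm, Finset.sum_add_distrib, Finset.sum_sub_distrib, ← Finset.mul_sum, hlin, hquad,
    Finset.sum_const, Finset.card_range, nsmul_eq_mul]
  field_simp
  ring

theorem qsin_product_at_rationals (n : ℕ) (hn : 0 < n) (τ : ℂ) (hτ : 0 < τ.im)
    (q : ℂ) (hq : q = Complex.exp (Real.pi * Complex.I * τ)) :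
    ∏ k ∈ Finset.Icc 1 (n - 1), qSin ((n : ℂ) * τ) ((k : ℂ) * Real.pi / n) =
      Complex.exp (Real.pi * Complex.I * τ * ((n : ℂ) - 1) * ((n : ℂ) - 2) / 12) *
        (qPoch (q ^ 2) (q ^ 2)) ^ 2 /
        ((qPoch (q ^ n) (q ^ (2 * n))) ^ (2 * n - 2) *
          (qPoch (q ^ (2 * n)) (q ^ (2 * n))) ^ 2) := by
  obtain ⟨m, rfl⟩ : ∃ m, n = m + 1 := ⟨n - 1, by omega⟩
  have hpi : (Real.pi : ℂ) ≠ 0 := by exact_mod_cast Real.pi_ne_zero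
  have hm : (m : ℂ) + 1 ≠ 0 := Nat.cast_add_one_ne_zero m
  have hq1 : ‖q‖ < 1 := hq ▸ norm_exp_pi_I_mul_lt_one hτ
  have hq0 : q ≠ 0 := hq ▸ exp_ne_zero _
  have hT : 0 < (((m + 1 : ℕ) : ℂ) * τ).im := by
    rw [← nsmul_eq_mul, ← Complex.imCLM_apply, map_nsmul]
    exact nsmul_pos hτ m.succ_ne_zero
  have hQ : exp (Real.pi * I * ((m + 1 : ℕ) * τ)) = q ^ (m + 1) := by
    rw [hq, ← exp_nat_mul]
    congr 1
    ring
  have hpow : (q ^ (m + 1)) ^ 2 = q ^ (2 * (m + 1)) := by rw [← pow_mul, mul_comm]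
  have hfactor : ∀ i ∈ Finset.range m,
      qSin ((m + 1 : ℕ) * τ) ((1 + i : ℕ) * Real.pi / (m + 1 : ℕ)) =
        exp (Real.pi * I * τ * ((m + 1) * ((i + 1) / (m + 1) - 1 / 2) ^ 2)) *
        (qPoch (q ^ (2 * (i + 1))) (q ^ (2 * (m + 1))) *
          qPoch (q ^ (2 * (m - 1 - i + 1))) (q ^ (2 * (m + 1)))) /
        qPoch (q ^ (m + 1)) (q ^ (2 * (m + 1))) ^ 2 := by
    intro i hi
    have hi := Finset.mem_range.mp hi
    have hx : exp (2 * I * ((1 + i : ℕ) * Real.pi / (m + 1 : ℕ)) * ((m + 1 : ℕ) * τ)) =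
        q ^ (2 * (i + 1)) := by
      rw [hq, ← exp_nat_mul]
      congr 1
      push_cast
      field_simp
      ring
    have hdiv : q ^ (2 * (m + 1)) / q ^ (2 * (i + 1)) = q ^ (2 * (m - 1 - i + 1)) := by
      rw [div_eq_iff (pow_ne_zero _ hq0), ← pow_add]
      congr 1
      omega
    rw [qSin_eq_qPoch _ hT, hQ, hx, hpow, hdiv]
    congr 3
    push_cast
    field_simp
    ring
  have hexp : ∏ i ∈ Finset.range m,
      exp (Real.pi * I * τ * ((m + 1) * ((i + 1) / (m + 1) - 1 / 2) ^ 2)) =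
      exp (Real.pi * I * τ * (((m + 1 : ℕ) : ℂ) - 1) * (((m + 1 : ℕ) : ℂ) - 2) / 12) := by
    rw [← exp_sum, ← Finset.mul_sum, sum_range_sq_sub_half]
    congr 1
    push_cast
    ring
  have hnorm : ‖q ^ (2 * (m + 1))‖ < 1 := by
    rw [norm_pow]
    exact pow_lt_one₀ (norm_nonneg _) hq1 (by omega)
  have hP := qPoch_ne_zero hnorm hnorm
  have hres : ∏ i ∈ Finset.range m, qPoch (q ^ (2 * (i + 1))) (q ^ (2 * (m + 1))) =
      qPoch (q ^ 2) (q ^ 2) / qPoch (q ^ (2 * (m + 1))) (q ^ (2 * (m + 1))) := by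
    rw [eq_div_iff hP, ← Finset.prod_range_succ fun i => qPoch (q ^ (2 * (i + 1))) _,
      ← prod_qPoch_residue (norm_sq_lt_one hq1) (q ^ 2) m.succ_pos]
    refine Finset.prod_congr rfl fun i _ => ?_
    rw [← pow_mul, ← pow_mul, ← pow_add]
    congr 2
    ring
  rw [Nat.add_sub_cancel, ← Finset.Ico_add_one_right_eq_Icc, Finset.prod_Ico_eq_prod_range,
    Nat.add_sub_cancel, Finset.prod_congr rfl hfactor, Finset.prod_div_distrib,
    Finset.prod_mul_distrib, Finset.prod_mul_distrib, hexp,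
    Finset.prod_range_reflect (fun i => qPoch (q ^ (2 * (i + 1))) (q ^ (2 * (m + 1)))), hres,
    Finset.prod_const, Finset.card_range, ← pow_mul, show 2 * (m + 1) - 2 = 2 * m by omega]
  generalize qPoch (q ^ (2 * (m + 1))) (q ^ (2 * (m + 1))) = A at hP ⊢
  rw [← pow_two, div_pow, mul_div_assoc', div_div, mul_comm (A ^ 2)]
end

section
/- Let n be a positive integer, let τ be a complex number with Im(τ) > 0, set q = e^{πiτ} and τ' = -1/τ. Then θ₁(π/2 | τ'/n) = (-iτ'/n)^{-1/2} · (q^n, q^n, q^{2n}; q^{2n})_∞, where (-iτ'/n)^{-1/2} is taken with the principal branch of the square root. -/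
open Complex

open Filter Topology

/-- The reciprocal `1 / ((1 - p) ⋯ (1 - p ^ m))`, extended by zero to negative integers `m`. -/
noncomputable def invQFactorial (p : ℂ) : ℤ → ℂ
  | Int.ofNat m => (∏ j ∈ Finset.range m, (1 - p * p ^ j))⁻¹
  | Int.negSucc _ => 0

lemma one_sub_mul_pow_ne_zero_s12 {p : ℂ} (hp : ‖p‖ < 1) (j : ℕ) : 1 - p * p ^ j ≠ 0 := by
  rw [← pow_succ', sub_ne_zero]
  intro h
  have h1 : ‖p‖ ^ (j + 1) < 1 := pow_lt_one₀ (norm_nonneg _) hp (Nat.succ_ne_zero j)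
  rw [← norm_pow, ← h, norm_one] at h1
  exact lt_irrefl _ h1

lemma invQFactorial_sub_one {p : ℂ} (hp : ‖p‖ < 1) (m : ℤ) :
    invQFactorial p (m - 1) = (1 - p ^ m) * invQFactorial p m := by
  rcases m with (_ | m) | m
  · have h : (Int.ofNat 0 - 1 : ℤ) = Int.negSucc 0 := rfl
    rw [h]
    simp [invQFactorial]
  · have h : (Int.ofNat (m + 1) - 1 : ℤ) = Int.ofNat m := by simp
    have h0 := one_sub_mul_pow_ne_zero_s12 hp m
    rw [h]
    simp only [invQFactorial, Finset.prod_range_succ, Int.ofNat_eq_natCast, zpow_natCast, mul_inv]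
    rw [pow_succ']
    field_simp
  · have h : (Int.negSucc m - 1 : ℤ) = Int.negSucc (m + 1) := by grind
    rw [h]
    simp [invQFactorial]

lemma summable_mul_geometric (a : ℂ) {q : ℂ} (hq : ‖q‖ < 1) :
    Summable fun i : ℕ ↦ ‖-(a * q ^ i)‖ := by
  simpa using (summable_geometric_of_lt_one (norm_nonneg _) hq).mul_left ‖a‖

lemma tendsto_prod_qPoch (a : ℂ) {q : ℂ} (hq : ‖q‖ < 1) :
    Tendsto (fun N ↦ ∏ i ∈ Finset.range N, (1 - a * q ^ i)) atTop (𝓝 (qPoch a q)) := by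
  have h := multipliable_one_add_of_summable (summable_mul_geometric a hq)
  simp only [← sub_eq_add_neg] at h
  exact h.tendsto_prod_tprod_nat

lemma qPoch_self_ne_zero {p : ℂ} (hp : ‖p‖ < 1) : qPoch p p ≠ 0 := by
  have h := tprod_one_add_ne_zero_of_summable (f := fun i : ℕ ↦ -(p * p ^ i))
    (fun i ↦ by simpa [← sub_eq_add_neg] using one_sub_mul_pow_ne_zero_s12 hp i)
    (summable_mul_geometric p hp)
  simpa [← sub_eq_add_neg, qPoch] using h

lemma tendsto_invQFactorial_natCast {p : ℂ} (hp : ‖p‖ < 1) :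
    Tendsto (fun m : ℕ ↦ invQFactorial p m) atTop (𝓝 (qPoch p p)⁻¹) :=
  (tendsto_prod_qPoch p hp).inv₀ (qPoch_self_ne_zero hp)

lemma tendsto_invQFactorial {p : ℂ} (hp : ‖p‖ < 1) :
    Tendsto (invQFactorial p) atTop (𝓝 (qPoch p p)⁻¹) := by
  rw [← Nat.map_cast_int_atTop, tendsto_map'_iff]
  exact tendsto_invQFactorial_natCast hp

lemma exists_norm_invQFactorial_le {p : ℂ} (hp : ‖p‖ < 1) :
    ∃ C, ∀ m, ‖invQFactorial p m‖ ≤ C := by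
  obtain ⟨C, hC⟩ := (Metric.isBounded_range_of_tendsto _
    (tendsto_invQFactorial_natCast hp)).exists_norm_le
  refine ⟨C, fun m ↦ ?_⟩
  rcases m with m | m
  · exact hC _ ⟨m, rfl⟩
  · simpa [invQFactorial] using (norm_nonneg _).trans (hC _ ⟨0, rfl⟩)

/-- A finite form of the Jacobi triple product at `z = -1`, for the terms
`t k = (-1) ^ k * Q ^ (k ^ 2)` characterised by their recurrence. -/
lemma tsum_mul_invQFactorial {Q : ℂ} (hQ0 : Q ≠ 0) (hQ : ‖Q‖ < 1) {t : ℤ → ℂ} (ht : Summable t)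
    (ht0 : t 0 = 1) (hrec : ∀ k, t (k + 1) = -Q ^ (2 * k + 1) * t k) (N : ℕ) :
    (∑' k : ℤ, t k * (invQFactorial (Q ^ 2) (N + k) * invQFactorial (Q ^ 2) (N - k))) *
        ∏ j ∈ Finset.range (2 * N), (1 - Q ^ 2 * (Q ^ 2) ^ j) =
      (∏ j ∈ Finset.range N, (1 - Q * (Q ^ 2) ^ j)) ^ 2 := by
  have hp : ‖Q ^ 2‖ < 1 := by
    rw [norm_pow]
    exact pow_lt_one₀ (norm_nonneg _) hQ two_ne_zero
  obtain ⟨C, hC⟩ := exists_norm_invQFactorial_le hp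
  set u := invQFactorial (Q ^ 2) with hu
  have hsum (M : ℕ) : Summable fun k : ℤ ↦ t k * (u (M + k) * u (M - k)) := by
    refine Summable.of_norm_bounded (ht.norm.mul_right (C * C)) fun k ↦ ?_
    rw [norm_mul, norm_mul]
    have := (norm_nonneg _).trans (hC 0)
    gcongr <;> exact hC _
  induction N with
  | zero =>
    rw [tsum_eq_single 0]
    · simp [hu, ht0, show invQFactorial (Q ^ 2) 0 = 1 by
        simp [invQFactorial]]
    · intro k hk
      rcases k with (_ | k) | k
      · simp at hk
      · simp [hu, show (-1 + -(k : ℤ)) = Int.negSucc k by grind, invQFactorial]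
      · simp [hu, invQFactorial]
  | succ N ih =>
    have hstep (k : ℤ) :
        (1 - Q ^ 2 * (Q ^ 2) ^ (2 * N)) * (1 - Q ^ 2 * (Q ^ 2) ^ (2 * N + 1)) *
          (t k * (u ((N + 1 : ℕ) + k) * u ((N + 1 : ℕ) - k))) =
        (1 + Q ^ (4 * N + 2)) * (t k * (u (N + k) * u (N - k))) -
        Q ^ (2 * N + 1) * (t (k + 1) * (u (N + (k + 1)) * u (N - (k + 1))) +
          t (k - 1) * (u (N + (k - 1)) * u (N - (k - 1)))) := by
      have h1 := invQFactorial_sub_one hp (N + 1 + k)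
      have h2 := invQFactorial_sub_one hp (N + k)
      have h3 := invQFactorial_sub_one hp (N + 1 - k)
      have h4 := invQFactorial_sub_one hp (N - k)
      have h5 := hrec (k - 1)
      rw [← hu] at h1 h2 h3 h4
      rw [show (N + 1 + k - 1 : ℤ) = N + k by ring] at h1
      rw [show (N + 1 - k - 1 : ℤ) = N - k by ring] at h3
      rw [sub_add_cancel] at h5
      have hx : Q ^ k ≠ 0 := zpow_ne_zero _ hQ0
      have h6 : t (k - 1) = -(Q / (Q ^ k) ^ 2) * t k := by
        rw [h5, show 2 * (k - 1) + 1 = k + k - 1 by ring, zpow_sub₀ hQ0, zpow_add₀ hQ0, zpow_one]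
        field_simp
      rw [h6, hrec k, show (N + (k + 1) : ℤ) = N + 1 + k by ring,
        show (N - (k + 1) : ℤ) = N - k - 1 by ring,
        show (N + (k - 1) : ℤ) = N + k - 1 by ring,
        show (N - (k - 1) : ℤ) = N + 1 - k by ring,
        show ((N + 1 : ℕ) + k : ℤ) = N + 1 + k by push_cast; ring,
        show ((N + 1 : ℕ) - k : ℤ) = N + 1 - k by push_cast; ring, h2, h4, h1, h3,
        show 2 * k + 1 = k + k + 1 by ring]
      have hp0 : Q ^ 2 ≠ 0 := pow_ne_zero _ hQ0
      have hk : (Q ^ 2) ^ k = (Q ^ k) ^ 2 := by rw [← zpow_natCast, ← zpow_natCast, zpow_comm]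
      simp only [zpow_add₀ hQ0, zpow_add₀ hp0, zpow_sub₀ hp0, zpow_natCast, zpow_one, hk]
      field_simp
      ring
    have hS := hsum N
    have hS1 := (Equiv.addRight (1 : ℤ)).summable_iff.mpr hS
    have hS2 := (Equiv.subRight (1 : ℤ)).summable_iff.mpr hS
    have hT1 := (Equiv.addRight (1 : ℤ)).tsum_eq fun k : ℤ ↦ t k * (u (N + k) * u (N - k))
    have hT2 := (Equiv.subRight (1 : ℤ)).tsum_eq fun k : ℤ ↦ t k * (u (N + k) * u (N - k))
    simp only [Function.comp_def, Equiv.coe_addRight, Equiv.subRight_apply] at hS1 hS2 hT1 hT2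
    have hrecS := tsum_congr (L := .unconditional ℤ) hstep
    rw [tsum_mul_left, (hS.mul_left _).tsum_sub ((hS1.add hS2).mul_left _), tsum_mul_left,
      tsum_mul_left, hS1.tsum_add hS2, hT1, hT2] at hrecS
    rw [show 2 * (N + 1) = 2 * N + 1 + 1 by ring, Finset.prod_range_succ, Finset.prod_range_succ,
      Finset.prod_range_succ, mul_pow, ← ih]
    linear_combination (∏ j ∈ Finset.range (2 * N), (1 - Q ^ 2 * (Q ^ 2) ^ j)) * hrecS

/-- Gauss's product formula for `∑ (-1) ^ k * Q ^ (k ^ 2)`. -/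
lemma tsum_eq_qPoch {Q : ℂ} (hQ0 : Q ≠ 0) (hQ : ‖Q‖ < 1) {t : ℤ → ℂ} (ht : Summable t)
    (ht0 : t 0 = 1) (hrec : ∀ k, t (k + 1) = -Q ^ (2 * k + 1) * t k) :
    ∑' k, t k = qPoch Q (Q ^ 2) * qPoch Q (Q ^ 2) * qPoch (Q ^ 2) (Q ^ 2) := by
  have hp : ‖Q ^ 2‖ < 1 := by
    rw [norm_pow]
    exact pow_lt_one₀ (norm_nonneg _) hQ two_ne_zero
  obtain ⟨C, hC⟩ := exists_norm_invQFactorial_le hp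
  have hlim : Tendsto (fun N : ℕ ↦ ∑' k : ℤ,
      t k * (invQFactorial (Q ^ 2) (N + k) * invQFactorial (Q ^ 2) (N - k))) atTop
      (𝓝 (∑' k, t k * ((qPoch (Q ^ 2) (Q ^ 2))⁻¹ * (qPoch (Q ^ 2) (Q ^ 2))⁻¹))) := by
    refine tendsto_tsum_of_dominated_convergence (ht.norm.mul_right (C * C)) (fun k ↦ ?_)
      (Eventually.of_forall fun N k ↦ ?_)
    · have h := tendsto_invQFactorial hp
      have hN := tendsto_natCast_atTop_atTop (R := ℤ)
      exact ((h.comp (tendsto_atTop_add_const_right _ k hN)).mul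
        (h.comp (tendsto_atTop_add_const_right _ (-k) hN))).const_mul _
    · rw [norm_mul, norm_mul]
      have := (norm_nonneg _).trans (hC 0)
      gcongr <;> exact hC _
  have hden := (tendsto_prod_qPoch (Q ^ 2) hp).comp
    (tendsto_id.const_mul_atTop' (two_pos : 0 < 2))
  have h := tendsto_nhds_unique ((hlim.mul hden).congr
    (tsum_mul_invQFactorial hQ0 hQ ht ht0 hrec)) ((tendsto_prod_qPoch Q hp).pow 2)
  have h0 := qPoch_self_ne_zero hp
  rw [tsum_mul_right] at h
  field_simp at h
  rw [h]
  ring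

lemma jacobiTheta₂_half_eq_qPoch {τ Q : ℂ} (hτ : 0 < τ.im) (hQ : Q = cexp (Real.pi * I * τ)) :
    jacobiTheta₂ (1 / 2) τ = qPoch Q (Q ^ 2) * qPoch Q (Q ^ 2) * qPoch (Q ^ 2) (Q ^ 2) := by
  refine tsum_eq_qPoch (hQ ▸ exp_ne_zero _) ?_ ((summable_jacobiTheta₂_term_iff _ _).mpr hτ)
    (by simp [jacobiTheta₂_term]) fun k ↦ ?_
  · rw [hQ, norm_exp]
    simpa using mul_pos Real.pi_pos hτ
  · rw [hQ, ← exp_int_mul, neg_mul, ← neg_one_mul, ← exp_pi_mul_I, jacobiTheta₂_term,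
      jacobiTheta₂_term, ← exp_add, ← exp_add]
    congr 1
    push_cast
    ring

lemma theta1_pi_div_two {T : ℂ} (hT : 0 < T.im) :
    theta1 ((Real.pi : ℂ) / 2) T = cexp (Real.pi * I * T / 4) * jacobiTheta₂ (T / 2) T := by
  have hterm (k : ℤ) : cexp (Real.pi * I * T / 4) * jacobiTheta₂_term k (T / 2) T =
      cexp (Real.pi * I * T * (2 * k + 1) ^ 2 / 4) := by
    rw [jacobiTheta₂_term, ← exp_add]
    congr 1
    ring
  have hs : Summable fun k : ℤ ↦ cexp (Real.pi * I * T * (2 * k + 1) ^ 2 / 4) := by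
    simp only [← hterm]
    exact ((summable_jacobiTheta₂_term_iff _ _).mpr hT).mul_left _
  have hn : Summable fun k : ℕ ↦ cexp (Real.pi * I * T * (2 * k + 1) ^ 2 / 4) := by
    simpa [Function.comp_def] using hs.comp_injective Nat.cast_injective
  have hneg (k : ℕ) : cexp (Real.pi * I * T * (2 * (-((k : ℤ) + 1) : ℤ) + 1) ^ 2 / 4) =
      cexp (Real.pi * I * T * (2 * k + 1) ^ 2 / 4) := by
    congr 1
    push_cast
    ring
  have hsin (k : ℕ) : Complex.sin ((2 * k + 1) * (Real.pi / 2)) = (-1) ^ k := by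
    rw [show (2 * k + 1) * ((Real.pi : ℂ) / 2) = Real.pi / 2 + k * Real.pi by ring,
      Complex.sin_antiperiodic.add_nat_mul_eq, Complex.sin_pi_div_two, mul_one]
  rw [jacobiTheta₂, ← tsum_mul_left, tsum_congr hterm,
    tsum_of_nat_of_neg_add_one (by simpa using hn) (by simpa only [hneg] using hn),
    tsum_congr hneg, theta1, two_mul]
  have key : ∑' k : ℕ, (-1 : ℂ) ^ k * cexp (Real.pi * I * T * (2 * k + 1) ^ 2 / 4) *
      Complex.sin ((2 * k + 1) * (Real.pi / 2)) =
      ∑' k : ℕ, cexp (Real.pi * I * T * (2 * k + 1) ^ 2 / 4) := by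
    refine tsum_congr fun k ↦ ?_
    rw [hsin, mul_right_comm, ← mul_pow]
    simp
  rw [key]
  simp

theorem theta1_at_pi_over_two (n : ℕ) (hn : 0 < n) (τ : ℂ) (hτ : 0 < τ.im)
    (q : ℂ) (hq : q = Complex.exp (Real.pi * Complex.I * τ))
    (τ' : ℂ) (hτ' : τ' = -1 / τ) :
    theta1 ((Real.pi : ℂ) / 2) (τ' / n) =
      (-Complex.I * τ' / n) ^ (-(1 / 2) : ℂ) *
        (qPoch (q ^ n) (q ^ (2 * n)) * qPoch (q ^ n) (q ^ (2 * n)) *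
          qPoch (q ^ (2 * n)) (q ^ (2 * n))) := by
  have hτ0 : τ ≠ 0 := fun h ↦ by simp [h] at hτ
  have hn0 : (n : ℂ) ≠ 0 := Nat.cast_ne_zero.mpr hn.ne'
  have hnτ : 0 < ((n : ℂ) * τ).im := by
    simpa using mul_pos (Nat.cast_pos.mpr hn) hτ
  have hT : τ' / n = -((n : ℂ) * τ)⁻¹ := by
    rw [hτ']
    field_simp
  have hT0 : τ' / n ≠ 0 := by
    rw [hT]
    exact neg_ne_zero.mpr (inv_ne_zero (mul_ne_zero hn0 hτ0))
  have hTim : 0 < (τ' / n).im := by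
    rw [hT, neg_im, inv_im, neg_div, neg_neg]
    exact div_pos hnτ (normSq_pos.mpr (mul_ne_zero hn0 hτ0))
  have hQ : q ^ n = cexp (Real.pi * I * (n * τ)) := by
    rw [hq, ← exp_nat_mul]
    congr 1
    ring
  have hinv : -1 / (τ' / n) = n * τ := by
    rw [hT]
    field_simp
  rw [theta1_pi_div_two hTim, jacobiTheta₂_functional_equation, hinv,
    show τ' / n / 2 / (τ' / n) = 1 / 2 by rw [div_right_comm, div_self hT0],
    jacobiTheta₂_half_eq_qPoch hnτ hQ,
    ← pow_mul, mul_comm n 2, cpow_neg,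
    mul_div_assoc (-I), one_div]
  have hexp : cexp (Real.pi * I * (τ' / n) / 4) *
      cexp (-Real.pi * I * (τ' / n / 2) ^ 2 / (τ' / n)) = 1 := by
    rw [← exp_add, exp_eq_one_iff]
    refine ⟨0, ?_⟩
    generalize τ' / n = T at hT0
    field_simp
    norm_num
  rw [mul_comm (_⁻¹) (cexp _), mul_assoc (cexp _), ← mul_assoc, hexp, one_mul]
end
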